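/- arXiv:1907.00632 — 2 statements merged into one kernel-verified Lean document; each statement's English description precedes it below -/
import Mathlib

section
/- Double-exponential law for the largest block: let L(π) denote the size of the largest block of a non-crossing partition π of [n], fix an integer x, and for n ≥ 2 set k(n) = ⌊log₂ n⌋ + x and α(n) = 2^{log₂ n − ⌊log₂ n⌋} = n/2^{⌊log₂ n⌋} ∈ [1, 2). Then the probability P[L_n ≤ k(n)] = (1/C_n)·#{π ∈ NC(n) : L(π) ≤ k(n)} satisfies P[L_n ≤ k(n)] = exp(−α(n)·2^{−(x+1)})·(1 + o(1)) as n → ∞; in particular, exp(α(n)·2^{−(x+1)})·P[L_n ≤ k(n)] → 1. -/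
/-- A finite partition of `Fin n` (representing `[n] = {1, …, n}`) is *non-crossing* if
there are no indices `a < b < c < d` with `a, c` in one block and `b, d` in a
different block. -/
def IsNonCrossing {n : ℕ} (P : Finpartition (Finset.univ : Finset (Fin n))) : Prop :=
  ∀ a b c d : Fin n, a < b → b < c → c < d →
    ∀ B ∈ P.parts, ∀ B' ∈ P.parts,
      a ∈ B → c ∈ B → b ∈ B' → d ∈ B' → B = B'

/-- The type of non-crossing partitions of `[n]`. -/
def NCPart (n : ℕ) : Type :=
  {P : Finpartition (Finset.univ : Finset (Fin n)) // IsNonCrossing P}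

noncomputable instance (n : ℕ) : Fintype (NCPart n) :=
  Fintype.ofInjective (fun P => P.1.parts)
    (fun _ _ h => Subtype.ext (Finpartition.ext h))

/-- The number of blocks of a non-crossing partition. -/
def numBlocks {n : ℕ} (P : NCPart n) : ℕ := P.1.parts.card

/-- The number of blocks of size `l` of a non-crossing partition. -/
def numBlocksOfSize {n : ℕ} (l : ℕ) (P : NCPart n) : ℕ :=
  (P.1.parts.filter fun B => B.card = l).card

open Filter

/-- The size of the largest block of a non-crossing partition. -/
def maxBlockSize {n : ℕ} (P : NCPart n) : ℕ := P.1.parts.sup Finset.card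

section Aux
open Finset

structure Good (k n : ℕ) (P : Finset (Finset ℕ)) : Prop where
  ne : ∀ B ∈ P, B.Nonempty
  le : ∀ B ∈ P, B.card ≤ k
  sub : ∀ B ∈ P, ∀ x ∈ B, x < n
  disj : ∀ B ∈ P, ∀ B' ∈ P, ∀ x, x ∈ B → x ∈ B' → B = B'
  nc : ∀ a b c d : ℕ, a < b → b < c → c < d → ∀ B ∈ P, ∀ B' ∈ P,
    a ∈ B → c ∈ B → b ∈ B' → d ∈ B' → B = B'
  cov : ∀ B ∈ P, ∀ a ∈ B, ∀ c ∈ B, ∀ s, a < s → s < c → ∃ B' ∈ P, s ∈ B'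

def unc (n : ℕ) (P : Finset (Finset ℕ)) : Finset ℕ :=
  (range n).filter (fun x => ∀ B ∈ P, x ∉ B)

lemma mem_unc {n : ℕ} {P : Finset (Finset ℕ)} {x : ℕ} :
    x ∈ unc n P ↔ x < n ∧ ∀ B ∈ P, x ∉ B := by simp [unc]

open Classical in
noncomputable def TT (k n h : ℕ) : Finset (Finset (Finset ℕ)) :=
  ((range n).powerset.powerset).filter (fun P => Good k n P ∧ (unc n P).card = h)

lemma mem_TT {k n h : ℕ} {P : Finset (Finset ℕ)} :
    P ∈ TT k n h ↔ Good k n P ∧ (unc n P).card = h := by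
  simp only [TT, mem_filter, mem_powerset, and_iff_right_iff_imp]
  rintro ⟨g, -⟩ B hB
  simp only [mem_powerset]
  intro x hx
  exact mem_range.2 (g.sub B hB x hx)

lemma exists_top (S : Finset ℕ) (c : ℕ) (hc : c ≤ S.card) :
    ∃ U ⊆ S, U.card = c ∧ ∀ u ∈ U, ∀ s ∈ S, u < s → s ∈ U := by
  induction c with
  | zero => exact ⟨∅, by simp⟩
  | succ c ih =>
    obtain ⟨U, hU, hc', ht⟩ := ih (by omega)
    have hne : (S \ U).Nonempty := by
      rw [← card_pos, card_sdiff_of_subset hU]; omega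
    have hm := max'_mem _ hne
    refine ⟨insert ((S \ U).max' hne) U, ?_, ?_, ?_⟩
    · intro x hx
      grind
    · rw [card_insert_of_notMem (by grind), hc']
    · intro u hu s hs hus
      by_cases hsU : s ∈ U
      · grind
      · have := le_max' (S \ U) s (by grind)
        grind

lemma topset_unique (S U V : Finset ℕ) (hU : U ⊆ S) (hV : V ⊆ S) (hc : U.card = V.card)
    (tU : ∀ u ∈ U, ∀ s ∈ S, u < s → s ∈ U) (tV : ∀ u ∈ V, ∀ s ∈ S, u < s → s ∈ V) :
    U = V := by
  by_cases h : U ⊆ V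
  · exact eq_of_subset_of_card_le h hc.ge
  · obtain ⟨a, ha, hna⟩ := not_subset.1 h
    refine (eq_of_subset_of_card_le (fun v hv => ?_) hc.le).symm
    rcases lt_trichotomy a v with h1 | h1 | h1
    · exact tU a ha v (hV hv) h1
    · exact h1 ▸ ha
    · exact absurd (tV v hv a (hU ha) h1) hna

/-- size of the block(s) containing `n` -/
def bsz (n : ℕ) (P : Finset (Finset ℕ)) : ℕ := (P.filter (n ∈ ·)).sup card
def rm (n : ℕ) (P : Finset (Finset ℕ)) : Finset (Finset ℕ) := P.filter (n ∉ ·)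

lemma Good.cases {k n : ℕ} {P : Finset (Finset ℕ)} (g : Good k (n+1) P) :
    (bsz n P = 0 ∧ rm n P = P ∧ ∀ B ∈ P, n ∉ B) ∨
    (∃ B ∈ P, n ∈ B ∧ bsz n P = B.card ∧ rm n P = P.erase B) := by
  by_cases h : ∃ B ∈ P, n ∈ B
  · right
    obtain ⟨B, hB, hn⟩ := h
    have : P.filter (n ∈ ·) = {B} := by
      ext C; simp only [mem_filter, mem_singleton]
      constructor
      · rintro ⟨hC, hnC⟩; exact g.disj _ hC _ hB n hnC hn
      · rintro rfl; exact ⟨hB, hn⟩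
    refine ⟨B, hB, hn, by simp [bsz, this], ?_⟩
    ext C; simp only [rm, mem_filter, mem_erase]
    constructor
    · rintro ⟨hC, hnC⟩; exact ⟨fun h => hnC (h ▸ hn), hC⟩
    · rintro ⟨hC, hnC⟩; exact ⟨hnC, fun h => hC (g.disj _ hnC _ hB n h hn)⟩
  · left
    push Not at h
    refine ⟨?_, ?_, h⟩
    · rw [bsz, filter_eq_empty_iff.2 (fun B hB => h B hB)]; rfl
    · exact filter_eq_self.2 h

lemma Good.mono {k n m : ℕ} {P : Finset (Finset ℕ)} (g : Good k n P)
    (h : ∀ B ∈ P, ∀ x ∈ B, x < m) : Good k m P :=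
  ⟨g.ne, g.le, h, g.disj, g.nc, g.cov⟩

lemma Good.rm {k n : ℕ} {P : Finset (Finset ℕ)} (g : Good k (n+1) P) : Good k n (rm n P) := by
  have hm : ∀ B, B ∈ _root_.rm n P ↔ B ∈ P ∧ n ∉ B := by simp [_root_.rm]
  have hs : ∀ B ∈ P, n ∉ B → ∀ x ∈ B, x < n := by
    intro B hB hn x hx
    have := g.sub B hB x hx
    have : x ≠ n := fun h => hn (h ▸ hx)
    omega
  refine ⟨?_, ?_, ?_, ?_, ?_, ?_⟩
  · intro B hB; exact g.ne B ((hm B).1 hB).1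
  · intro B hB; exact g.le B ((hm B).1 hB).1
  · intro B hB; exact hs B ((hm B).1 hB).1 ((hm B).1 hB).2
  · intro B hB B' hB'; exact g.disj B ((hm B).1 hB).1 B' ((hm B').1 hB').1
  · intro a b c d h1 h2 h3 B hB B' hB'
    exact g.nc a b c d h1 h2 h3 B ((hm B).1 hB).1 B' ((hm B').1 hB').1
  · intro B hB a ha c hc s h1 h2
    obtain ⟨hB, hn⟩ := (hm B).1 hB
    obtain ⟨B', hB', hs'⟩ := g.cov B hB a ha c hc s h1 h2
    refine ⟨B', (hm _).2 ⟨hB', fun hn' => hn ?_⟩, hs'⟩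
    rw [g.nc a s c n h1 h2 (hs B hB hn c hc) B hB B' hB' ha hc hs' hn']
    exact hn'

lemma unc_rm_none {n : ℕ} {P : Finset (Finset ℕ)} (h : ∀ B ∈ P, n ∉ B) :
    unc (n+1) P = insert n (unc n P) := by
  ext x; simp only [mem_unc, mem_insert]
  grind

lemma unc_rm_block {k n : ℕ} {P : Finset (Finset ℕ)} (g : Good k (n+1) P) {B : Finset ℕ}
    (hB : B ∈ P) (hn : n ∈ B) :
    unc n (P.erase B) = (unc (n+1) P) ∪ (B.erase n) := by
  ext x; simp only [mem_unc, mem_union, mem_erase]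
  constructor
  · rintro ⟨h1, h2⟩
    by_cases hx : x ∈ B
    · exact Or.inr ⟨by omega, hx⟩
    · exact Or.inl ⟨by omega, fun C hC => by grind⟩
  · rintro (⟨h1, h2⟩ | ⟨h1, h2⟩)
    · have : x ≠ n := fun h => h2 B hB (h ▸ hn)
      exact ⟨by omega, fun C hC => h2 C hC.2⟩
    · have := g.sub B hB x h2
      refine ⟨by omega, fun C hC hx => hC.1 (g.disj _ hC.2 _ hB x hx h2)⟩

lemma unc_card {k n : ℕ} {P : Finset (Finset ℕ)} (g : Good k (n+1) P) :
    (unc n (rm n P)).card + 1 = (unc (n+1) P).card + bsz n P := by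
  rcases g.cases with ⟨h1, h2, h3⟩ | ⟨B, hB, hn, h1, h2⟩
  · rw [h1, h2, unc_rm_none h3, card_insert_of_notMem]
    simp [mem_unc]
  · rw [h1, h2, unc_rm_block g hB hn, card_union_of_disjoint, card_erase_of_mem hn]
    · have : 0 < B.card := card_pos.2 ⟨n, hn⟩
      omega
    · rw [Finset.disjoint_left]
      intro x hx hx'
      exact (mem_unc.1 hx).2 B hB (mem_of_mem_erase hx')

lemma block_top {k n : ℕ} {P : Finset (Finset ℕ)} (g : Good k (n+1) P) {B : Finset ℕ}
    (hB : B ∈ P) (hn : n ∈ B) : B.erase n ⊆ unc n (P.erase B) ∧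
    ∀ u ∈ B.erase n, ∀ s ∈ unc n (P.erase B), u < s → s ∈ B.erase n := by
  rw [unc_rm_block g hB hn]
  refine ⟨subset_union_right, fun u hu s hs hus => ?_⟩
  rcases mem_union.1 hs with hs | hs
  · exfalso
    have hs := mem_unc.1 hs
    have : s ≠ n := fun h => hs.2 B hB (h ▸ hn)
    obtain ⟨C, hC, hsC⟩ := g.cov B hB u (mem_of_mem_erase hu) n hn s hus (by omega)
    exact hs.2 C hC hsC
  · exact hs

lemma Good.add {k n : ℕ} {P : Finset (Finset ℕ)} (g : Good k n P) {U : Finset ℕ}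
    (hU : U ⊆ unc n P) (ht : ∀ u ∈ U, ∀ s ∈ unc n P, u < s → s ∈ U) (hk : U.card + 1 ≤ k) :
    Good k (n+1) (insert (insert n U) P) := by
  have hUn : ∀ u ∈ insert n U, u < n + 1 := by
    intro u hu
    rcases mem_insert.1 hu with rfl | hu
    · omega
    · have := (mem_unc.1 (hU hu)).1; omega
  have hd : ∀ u ∈ insert n U, ∀ B ∈ P, u ∉ B := by
    intro u hu B hB hB'
    rcases mem_insert.1 hu with rfl | hu
    · exact lt_irrefl _ (g.sub B hB u hB')
    · exact (mem_unc.1 (hU hu)).2 B hB hB'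
  refine ⟨?_, ?_, ?_, ?_, ?_, ?_⟩
  · intro B hB
    rcases mem_insert.1 hB with rfl | hB
    · exact ⟨n, by simp⟩
    · exact g.ne B hB
  · intro B hB
    rcases mem_insert.1 hB with rfl | hB
    · exact (card_insert_le _ _).trans hk
    · exact g.le B hB
  · intro B hB x hx
    rcases mem_insert.1 hB with rfl | hB
    · exact hUn x hx
    · have := g.sub B hB x hx; omega
  · intro B hB B' hB' x hx hx'
    rcases mem_insert.1 hB with rfl | hB <;> rcases mem_insert.1 hB' with rfl | hB'
    · rfl
    · exact absurd hx' (hd x hx B' hB')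
    · exact absurd hx (hd x hx' B hB)
    · exact g.disj _ hB _ hB' x hx hx'
  · intro a b c d h1 h2 h3 B hB B' hB' ha hc hb hd'
    rcases mem_insert.1 hB with rfl | hB <;> rcases mem_insert.1 hB' with rfl | hB'
    · rfl
    · obtain ⟨C, hC, hcC⟩ := g.cov B' hB' b hb d hd' c h2 h3
      exact absurd hcC (hd c hc C hC)
    · obtain ⟨C, hC, hcC⟩ := g.cov B hB a ha c hc b h1 h2
      exact absurd hcC (hd b hb C hC)
    · exact g.nc a b c d h1 h2 h3 B hB B' hB' ha hc hb hd'
  · intro B hB a ha c hc s h1 h2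
    rcases mem_insert.1 hB with rfl | hB
    · by_cases hs : s ∈ unc n P
      · refine ⟨_, mem_insert_self _ _, mem_insert_of_mem (ht a ?_ s hs h1)⟩
        have := hUn c hc
        have : a ≠ n := by omega
        exact (mem_insert.1 ha).resolve_left this
      · have := hUn c hc
        rw [mem_unc] at hs
        push Not at hs
        obtain ⟨C, hC, h⟩ := hs (by omega)
        exact ⟨C, mem_insert_of_mem hC, h⟩
    · obtain ⟨C, hC, h⟩ := g.cov B hB a ha c hc s h1 h2
      exact ⟨C, mem_insert_of_mem hC, h⟩

lemma Good.n_notMem {k n : ℕ} {P : Finset (Finset ℕ)} (g : Good k n P) : ∀ B ∈ P, n ∉ B :=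
  fun B hB h => lt_irrefl _ (g.sub B hB n h)

lemma bsz_none {n : ℕ} {P : Finset (Finset ℕ)} (h : ∀ B ∈ P, n ∉ B) : bsz n P = 0 := by
  rw [bsz, filter_eq_empty_iff.2 (fun B hB => h B hB)]; rfl

lemma rm_none {n : ℕ} {P : Finset (Finset ℕ)} (h : ∀ B ∈ P, n ∉ B) : rm n P = P :=
  filter_eq_self.2 h

lemma fiber_card {k n h c : ℕ} (hck : c ≤ k) (hc : 1 ≤ h + c) :
    ((TT k (n+1) h).filter (fun P => bsz n P = c)).card = (TT k n (h + c - 1)).card := by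
  refine Finset.card_nbij (rm n) ?_ ?_ ?_
  · intro P hP
    simp only [coe_filter, Set.mem_ofPred_eq, mem_TT, SetLike.mem_coe] at hP ⊢
    obtain ⟨⟨g, hu⟩, hb⟩ := hP
    have := unc_card g
    exact ⟨g.rm, by omega⟩
  · intro P hP Q hQ hPQ
    simp only [coe_filter, Set.mem_ofPred_eq, mem_TT] at hP hQ
    obtain ⟨⟨g, hu⟩, hb⟩ := hP
    obtain ⟨⟨g', hu'⟩, hb'⟩ := hQ
    rcases g.cases with ⟨h1, h2, h3⟩ | ⟨B, hB, hn, h1, h2⟩ <;>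
      rcases g'.cases with ⟨h1', h2', h3'⟩ | ⟨B', hB', hn', h1', h2'⟩
    · rw [← h2, ← h2', hPQ]
    · have : 0 < B'.card := card_pos.2 ⟨n, hn'⟩
      omega
    · have : 0 < B.card := card_pos.2 ⟨n, hn⟩
      omega
    · have t := block_top g hB hn
      have t' := block_top g' hB' hn'
      have e : P.erase B = Q.erase B' := by rw [← h2, ← h2', hPQ]
      rw [← e] at t'
      have := topset_unique _ _ _ t.1 t'.1 (by
        rw [card_erase_of_mem hn, card_erase_of_mem hn']; omega) t.2 t'.2
      have hBB : B = B' := by rw [← insert_erase hn, ← insert_erase hn', this]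
      subst hBB
      rw [← insert_erase hB, e, insert_erase hB']
  · intro P hP
    simp only [SetLike.mem_coe, mem_TT] at hP
    obtain ⟨g, hu⟩ := hP
    simp only [coe_filter, Set.mem_image, Set.mem_ofPred_eq, mem_TT]
    rcases Nat.eq_zero_or_pos c with rfl | hc0
    · have hg : Good k (n+1) P := g.mono (fun B hB x hx => by have := g.sub B hB x hx; omega)
      refine ⟨P, ⟨⟨hg, ?_⟩, bsz_none g.n_notMem⟩, rm_none g.n_notMem⟩
      have := unc_card hg
      rw [bsz_none g.n_notMem, rm_none g.n_notMem] at this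
      omega
    · obtain ⟨U, hU, hUc, ht⟩ := exists_top (unc n P) (c - 1) (by omega)
      have hg := g.add hU ht (by omega)
      have hnU : n ∉ U := fun h => by have := (mem_unc.1 (hU h)).1; omega
      have hr : rm n (insert (insert n U) P) = P := by
        rw [rm, filter_insert, if_neg (by simp)]
        exact rm_none g.n_notMem
      have hb : bsz n (insert (insert n U) P) = c := by
        rw [bsz, filter_insert, if_pos (by simp), filter_eq_empty_iff.2 (fun B hB => g.n_notMem B hB)]
        simp [hnU]; omega
      have := unc_card hg
      rw [hr, hb] at this
      exact ⟨_, ⟨⟨hg, by omega⟩, hb⟩, hr⟩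

lemma TT_rec (k n h : ℕ) : (TT k (n+1) h).card =
    ∑ c ∈ range (k+1), if 1 ≤ h + c then (TT k n (h + c - 1)).card else 0 := by
  rw [card_eq_sum_card_fiberwise (f := bsz n) (t := range (k+1))]
  · refine sum_congr rfl fun c hc => ?_
    split_ifs with h1
    · exact fiber_card (by simpa [Nat.lt_succ_iff] using hc) h1
    · rw [card_eq_zero, filter_eq_empty_iff]
      intro P hP hb
      obtain ⟨g, hu⟩ := mem_TT.1 hP
      have := unc_card g
      omega
  · intro P hP
    obtain ⟨g, hu⟩ := mem_TT.1 hP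
    simp only [coe_range, Set.mem_Iio]
    rcases g.cases with ⟨h1, h2, h3⟩ | ⟨B, hB, hn, h1, h2⟩
    · omega
    · have := g.le B hB; omega

lemma TT_zero (k h : ℕ) : (TT k 0 h).card = if h = 0 then 1 else 0 := by
  have : TT k 0 h = if h = 0 then {∅} else ∅ := by
    ext P
    have key : Good k 0 P ↔ P = ∅ := by
      constructor
      · intro g
        by_contra hne
        obtain ⟨B, hB⟩ := nonempty_iff_ne_empty.2 hne
        obtain ⟨x, hx⟩ := g.ne B hB
        exact absurd (g.sub B hB x hx) (by omega)
      · rintro rfl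
        constructor <;> simp
    rw [mem_TT, key]
    have : unc 0 P = ∅ := by simp [unc]
    rw [this]
    split_ifs with h0
    · simp [h0]
    · simp; intro _; omega
  rw [this]; split_ifs <;> simp

open Polynomial in
noncomputable def phi (k : ℕ) : ℚ[X] := ∑ c ∈ range (k+1), X ^ c

open Polynomial in
lemma TT_formula (k n h : ℕ) :
    ((n : ℚ) + 1) * (TT k n h).card = (h + 1) * (X ^ h * phi k ^ (n+1)).coeff n := by
  induction n generalizing h with
  | zero =>
    rw [TT_zero]
    have : (phi k).coeff 0 = 1 := by
      simp [phi, coeff_X_pow]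
    rcases Nat.eq_zero_or_pos h with rfl | hh
    · simp [this]
    · rw [coeff_X_pow_mul']
      simp [hh.ne']
  | succ n ih =>
    have h1 : ((n:ℚ) + 1) * (TT k (n+1) h).card =
        ∑ c ∈ range (k+1), ((h:ℚ) + c) * (X ^ h * X ^ c * phi k ^ (n+1)).coeff (n+1) := by
      rw [TT_rec, Nat.cast_sum, mul_sum]
      refine sum_congr rfl fun c _ => ?_
      split_ifs with hc
      · rw [ih]
        have : X ^ h * X ^ c * phi k ^ (n+1) = (X ^ (h + c - 1) * phi k ^ (n+1)) * X := by
          rw [← pow_add]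
          conv_lhs => rw [show h + c = (h + c - 1) + 1 by omega]
          ring
        rw [this, coeff_mul_X]
        congr 1
        rw [Nat.cast_sub hc]; push_cast; ring
      · have : h = 0 := by omega
        have : c = 0 := by omega
        subst_vars; simp
    have h2 : ∑ c ∈ range (k+1), ((h:ℚ) + c) * (X ^ h * X ^ c * phi k ^ (n+1)).coeff (n+1) =
        (C (h:ℚ) * (X ^ h * phi k ^ (n+2)) +
          X ^ h * (X * derivative (phi k)) * phi k ^ (n+1)).coeff (n+1) := by
      have e : X * derivative (phi k) = ∑ c ∈ range (k+1), C (c:ℚ) * X ^ c := by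
        rw [phi, derivative_sum, mul_sum]
        refine sum_congr rfl fun c _ => ?_
        rw [derivative_X_pow]
        rcases c with _ | c
        · simp
        · simp; ring
      have e2 : C (h:ℚ) * (X ^ h * phi k ^ (n+2)) =
          ∑ c ∈ range (k+1), C (h:ℚ) * (X ^ h * X ^ c * phi k ^ (n+1)) := by
        rw [pow_succ (phi k) (n+1)]
        conv_lhs => enter [2,2,2]; rw [phi]
        simp only [mul_sum]
        refine sum_congr rfl fun c _ => ?_
        ring
      rw [e, e2, mul_sum, sum_mul, ← sum_add_distrib, finsetSum_coeff]
      refine sum_congr rfl fun c _ => ?_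
      rw [show C (h:ℚ) * (X ^ h * X ^ c * phi k ^ (n+1)) + X ^ h * (C (c:ℚ) * X ^ c) * phi k ^ (n+1)
        = C ((h:ℚ) + c) * (X ^ h * X ^ c * phi k ^ (n+1)) by rw [C_add]; ring, coeff_C_mul]
    have h3 : (X * derivative (X ^ h * phi k ^ (n+2))).coeff (n+1) =
        ((n:ℚ)+1) * (X ^ h * phi k ^ (n+2)).coeff (n+1) := by
      rw [coeff_X_mul, coeff_derivative]; ring
    have h4 : X * derivative (X ^ h * phi k ^ (n+2)) = C (h:ℚ) * (X ^ h * phi k ^ (n+2)) +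
        C ((n:ℚ)+2) * (X ^ h * (X * derivative (phi k)) * phi k ^ (n+1)) := by
      rw [derivative_mul, derivative_X_pow, derivative_pow]
      rcases h with _ | h
      · simp; ring
      · simp; ring
    rw [h4, coeff_add, coeff_C_mul, coeff_C_mul] at h3
    rw [h2, coeff_add, coeff_C_mul] at h1
    have hn : ((n:ℚ)+1) ≠ 0 := by positivity
    apply mul_left_cancel₀ hn
    push_cast
    rw [show (n + 1 + 1) = n + 2 from rfl]
    linear_combination ((n:ℚ)+2) * h1 + h3
lemma link (k n : ℕ) : Nat.card {π : NCPart n // maxBlockSize π ≤ k} = (TT k n 0).card := by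
  have hmem : ∀ (P : Finpartition (Finset.univ : Finset (Fin n))) (C : Finset ℕ),
      C ∈ P.parts.image (fun B => B.map Fin.valEmbedding) ↔
        ∃ B ∈ P.parts, B.map Fin.valEmbedding = C := by
    intro P C; simp
  have hv : ∀ (B : Finset (Fin n)) (x : ℕ), x ∈ B.map Fin.valEmbedding ↔ ∃ h : x < n, ⟨x, h⟩ ∈ B := by
    intro B x
    simp only [Finset.mem_map, Fin.valEmbedding_apply]
    constructor
    · rintro ⟨a, ha, rfl⟩; exact ⟨a.2, ha⟩
    · rintro ⟨h, ha⟩; exact ⟨_, ha, rfl⟩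
  have hto : ∀ π : {π : NCPart n // maxBlockSize π ≤ k},
      π.1.1.parts.image (fun B => B.map Fin.valEmbedding) ∈ TT k n 0 := by
    rintro ⟨⟨P, hP⟩, hk⟩
    have hcov : ∀ s, s < n → ∃ B' ∈ P.parts.image (fun B => B.map Fin.valEmbedding), s ∈ B' := by
      intro s hs
      obtain ⟨B, hB, h⟩ := P.exists_mem (mem_univ (⟨s, hs⟩ : Fin n))
      exact ⟨_, (hmem _ _).2 ⟨B, hB, rfl⟩, (hv _ _).2 ⟨hs, h⟩⟩
    rw [mem_TT]
    refine ⟨⟨?_, ?_, ?_, ?_, ?_, ?_⟩, ?_⟩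
    · intro C hC
      obtain ⟨B, hB, rfl⟩ := (hmem _ _).1 hC
      exact (P.nonempty_of_mem_parts hB).map
    · intro C hC
      obtain ⟨B, hB, rfl⟩ := (hmem _ _).1 hC
      rw [card_map]
      exact (Finset.le_sup (f := Finset.card) hB).trans hk
    · intro C hC x hx
      obtain ⟨B, hB, rfl⟩ := (hmem _ _).1 hC
      exact ((hv _ _).1 hx).1
    · intro C hC C' hC' x hx hx'
      obtain ⟨B, hB, rfl⟩ := (hmem _ _).1 hC
      obtain ⟨B', hB', rfl⟩ := (hmem _ _).1 hC'
      obtain ⟨h, hx⟩ := (hv _ _).1 hx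
      obtain ⟨_, hx'⟩ := (hv _ _).1 hx'
      rw [P.eq_of_mem_parts hB hB' hx hx']
    · intro a b c d h1 h2 h3 C hC C' hC' ha hc hb hd
      obtain ⟨B, hB, rfl⟩ := (hmem _ _).1 hC
      obtain ⟨B', hB', rfl⟩ := (hmem _ _).1 hC'
      obtain ⟨_, ha⟩ := (hv _ _).1 ha
      obtain ⟨_, hb⟩ := (hv _ _).1 hb
      obtain ⟨_, hc⟩ := (hv _ _).1 hc
      obtain ⟨_, hd⟩ := (hv _ _).1 hd
      rw [hP _ _ _ _ h1 h2 h3 B hB B' hB' ha hc hb hd]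
    · intro C hC a ha c hc s h1 h2
      obtain ⟨B, hB, rfl⟩ := (hmem _ _).1 hC
      obtain ⟨hcn, hc⟩ := (hv _ _).1 hc
      exact hcov s (by omega)
    · rw [card_eq_zero, unc, filter_eq_empty_iff]
      intro s hs h
      obtain ⟨B, hB, h'⟩ := hcov s (mem_range.1 hs)
      exact h B hB h'
  have e : Nat.card {π : NCPart n // maxBlockSize π ≤ k} = Nat.card (TT k n 0) := by
    refine Nat.card_congr (Equiv.ofBijective (fun π => ⟨_, hto π⟩) ⟨?_, ?_⟩)
    · rintro ⟨⟨P, hP⟩, hk⟩ ⟨⟨Q, hQ⟩, hk'⟩ h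
      simp only [Subtype.mk.injEq] at h
      have h2 := Finset.image_injective (Finset.map_injective Fin.valEmbedding) h
      apply Subtype.ext; apply Subtype.ext; exact Finpartition.ext h2
    · rintro ⟨T, hT⟩
      obtain ⟨g, hu⟩ := mem_TT.1 hT
      have hcov : ∀ s, s < n → ∃ B ∈ T, s ∈ B := by
        intro s hs
        by_contra hcon
        push Not at hcon
        have : s ∈ unc n T := mem_unc.2 ⟨hs, hcon⟩
        rw [card_eq_zero.1 hu] at this
        simp at this
      let pull : Finset ℕ → Finset (Fin n) := fun B => univ.filter (fun i : Fin n => (i:ℕ) ∈ B)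
      have hpull : ∀ B i, i ∈ pull B ↔ (i:ℕ) ∈ B := by simp [pull]
      have hmp : ∀ B ∈ T, (pull B).map Fin.valEmbedding = B := by
        intro B hB
        ext x
        rw [hv]
        constructor
        · rintro ⟨h, hx⟩; exact (hpull _ _).1 hx
        · intro hx; exact ⟨g.sub B hB x hx, (hpull _ _).2 hx⟩
      have hmemT : ∀ A, A ∈ T.image pull ↔ ∃ B ∈ T, pull B = A := by intro A; simp
      have hdis : ∀ A ∈ T.image pull, ∀ A' ∈ T.image pull, ∀ x, x ∈ A → x ∈ A' → A = A' := by
        intro A hA A' hA' x hx hx'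
        obtain ⟨B, hB, rfl⟩ := (hmemT _).1 hA
        obtain ⟨B', hB', rfl⟩ := (hmemT _).1 hA'
        rw [g.disj B hB B' hB' x ((hpull _ _).1 hx) ((hpull _ _).1 hx')]
      let P : Finpartition (univ : Finset (Fin n)) :=
        { parts := T.image pull
          supIndep := by
            rw [Finset.supIndep_iff_pairwiseDisjoint]
            intro A hA A' hA' hne
            simp only [Function.onFun, id]
            rw [Finset.disjoint_left]
            intro x hx hx'
            exact hne (hdis A hA A' hA' x hx hx')
          sup_parts := by
            ext x
            simp only [Finset.mem_sup, id, mem_univ, iff_true]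
            obtain ⟨B, hB, h⟩ := hcov x x.2
            exact ⟨pull B, mem_image_of_mem _ hB, (hpull _ _).2 h⟩
          bot_notMem := by
            intro h
            obtain ⟨B, hB, h⟩ := (hmemT _).1 h
            obtain ⟨x, hx⟩ := g.ne B hB
            have : (⟨x, g.sub B hB x hx⟩ : Fin n) ∈ pull B := (hpull _ _).2 hx
            rw [h] at this
            simp at this }
      refine ⟨⟨⟨P, ?_⟩, ?_⟩, ?_⟩
      · intro a b c d h1 h2 h3 A hA A' hA' ha hc hb hd
        obtain ⟨B, hB, rfl⟩ := (hmemT _).1 hA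
        obtain ⟨B', hB', rfl⟩ := (hmemT _).1 hA'
        rw [hpull] at ha hb hc hd
        rw [g.nc a b c d h1 h2 h3 B hB B' hB' ha hc hb hd]
      · refine Finset.sup_le fun A hA => ?_
        obtain ⟨B, hB, rfl⟩ := (hmemT _).1 hA
        rw [← card_map Fin.valEmbedding, hmp B hB]
        exact g.le B hB
      · apply Subtype.ext
        change (T.image pull).image _ = T
        rw [image_image]
        conv_rhs => rw [← image_id (s := T)]
        exact image_congr (fun B hB => hmp B hB)
  rw [e, Nat.card_eq_fintype_card, Fintype.card_coe]

lemma phi_coeff (k n : ℕ) (hn : 1 ≤ n) : (phi k ^ (n+1)).coeff n =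
    ∑ j ∈ range (n+2), (-1:ℚ)^j * (n+1).choose j * (2*n - j*(k+1)).choose n := by
  have h1 : ((phi k : Polynomial ℚ) : PowerSeries ℚ) * (1 - PowerSeries.X) =
      1 - PowerSeries.X ^ (k+1) := by
    have : phi k * (1 - Polynomial.X) = 1 - Polynomial.X ^ (k+1) := by
      rw [phi]; exact geom_sum_mul_neg _ _
    have := congrArg (fun p : Polynomial ℚ => (p : PowerSeries ℚ)) this
    simpa using this
  have h2 : ((phi k : Polynomial ℚ) : PowerSeries ℚ) ^ (n+1) =
      (1 - PowerSeries.X ^ (k+1)) ^ (n+1) * (PowerSeries.invOneSubPow ℚ (n+1)).val := by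
    rw [← h1, mul_pow, mul_assoc]
    have := (PowerSeries.invOneSubPow ℚ (n+1)).inv_val
    rw [PowerSeries.invOneSubPow_inv_eq_one_sub_pow] at this
    rw [this, mul_one]
  rw [← Polynomial.coeff_coe, Polynomial.coe_pow, h2,
    PowerSeries.invOneSubPow_val_succ_eq_mk_add_choose, sub_eq_add_neg, add_comm, add_pow,
    sum_mul, map_sum]
  refine sum_congr rfl fun j _ => ?_
  rw [one_pow, mul_one, neg_pow, ← pow_mul, mul_comm (k+1) j]
  have : ((-1 : PowerSeries ℚ) ^ j * PowerSeries.X ^ (j*(k+1)) * ((n+1).choose j : PowerSeries ℚ)) *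
      PowerSeries.mk (fun i => ((n+i).choose n : ℚ)) =
      PowerSeries.C ((-1:ℚ)^j * (n+1).choose j) *
        (PowerSeries.X ^ (j*(k+1)) * PowerSeries.mk (fun i => ((n+i).choose n : ℚ))) := by
    simp; ring
  rw [this, PowerSeries.coeff_C_mul, PowerSeries.coeff_X_pow_mul']
  congr 1
  split_ifs with h
  · rw [PowerSeries.coeff_mk]; congr 2; omega
  · rw [Nat.choose_eq_zero_of_lt (by omega)]; simp

lemma count_formula (k n : ℕ) (hn : 1 ≤ n) :
    ((n:ℝ)+1) * (Nat.card {π : NCPart n // maxBlockSize π ≤ k} : ℝ) =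
    ∑ j ∈ range (n+2), (-1:ℝ)^j * (n+1).choose j * (2*n - j*(k+1)).choose n := by
  have h := TT_formula k n 0
  rw [pow_zero, one_mul, phi_coeff k n hn] at h
  rw [link]
  have h' := congrArg (fun q : ℚ => (q : ℝ)) h
  push_cast at h'
  linarith

lemma count_all (n : ℕ) (hn : 1 ≤ n) :
    ((n:ℝ)+1) * (Fintype.card (NCPart n) : ℝ) = (2*n).choose n := by
  have : Fintype.card (NCPart n) = Nat.card {π : NCPart n // maxBlockSize π ≤ n} := by
    rw [← Nat.card_eq_fintype_card]
    refine (Nat.card_congr (Equiv.subtypeUnivEquiv fun π => ?_)).symm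
    refine Finset.sup_le fun A hA => ?_
    simpa using card_le_univ A
  rw [this, count_formula n n hn, sum_eq_single 0]
  · simp
  · intro j _ hj
    have : 1 * (n+1) ≤ j*(n+1) := Nat.mul_le_mul_right _ (by omega)
    rw [Nat.choose_eq_zero_of_lt (n := 2*n - j*(n+1)) (by omega)]; simp
  · simp

noncomputable def qq (n i : ℕ) : ℝ := 2 ^ i * ((2*n - i).choose n : ℝ) / ((2*n).choose n : ℝ)

lemma qq_zero (n : ℕ) : qq n 0 = 1 := by
  have : ((2*n).choose n : ℝ) ≠ 0 := by
    exact_mod_cast (Nat.choose_pos (by omega)).ne'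
  simp [qq, this]

lemma qq_nonneg (n i : ℕ) : 0 ≤ qq n i := by unfold qq; positivity

lemma qq_succ (n i : ℕ) (hi : i ≤ n) (hn : 1 ≤ n) :
    qq n (i+1) = (1 - (i:ℝ) / (2*n - i)) * qq n i := by
  have h := Nat.choose_mul_succ_eq (2*n - (i+1)) n
  rw [show 2*n - (i+1) + 1 = 2*n - i by omega] at h
  have h' : (((2*n - (i+1)).choose n : ℕ) : ℝ) * (2*n - i) = ((2*n - i).choose n : ℕ) * (n - i) := by
    have := congrArg (fun t : ℕ => (t : ℝ)) h
    push_cast at this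
    rw [show 2*n - i - n = n - i by omega, Nat.cast_sub hi, Nat.cast_sub (by omega)] at this
    push_cast at this
    exact this
  have hi' : (i:ℝ) ≤ n := by exact_mod_cast hi
  have hn' : (1:ℝ) ≤ n := by exact_mod_cast hn
  have hp : (2*(n:ℝ) - i) ≠ 0 := by nlinarith
  have hc : ((2*n).choose n : ℝ) ≠ 0 := by
    exact_mod_cast (Nat.choose_pos (by omega)).ne'
  unfold qq
  field_simp
  rw [pow_succ]
  linear_combination 2 * (2:ℝ)^i * h'

lemma qq_big (n i : ℕ) (hi : n < i) (hn : 1 ≤ n) : qq n i = 0 := by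
  unfold qq
  rw [Nat.choose_eq_zero_of_lt (by omega)]; simp

lemma qq_le_one (n i : ℕ) (hn : 1 ≤ n) : qq n i ≤ 1 := by
  induction i with
  | zero => rw [qq_zero]
  | succ i ih =>
    rcases le_or_gt i n with hi | hi
    · rw [qq_succ n i hi hn]
      have hi' : (i:ℝ) ≤ n := by exact_mod_cast hi
      have h0 : 0 ≤ (i:ℝ) / (2*n - i) := div_nonneg (by positivity) (by linarith [(Nat.cast_nonneg n : (0:ℝ) ≤ n)])
      nlinarith [qq_nonneg n i]
    · rw [qq_big n (i+1) (by omega) hn]; norm_num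

lemma qq_lower (n i : ℕ) (hn : 1 ≤ n) : 1 - (i:ℝ)^2 / n ≤ qq n i := by
  have hn' : (1:ℝ) ≤ n := by exact_mod_cast hn
  induction i with
  | zero => rw [qq_zero]; simp
  | succ i ih =>
    rcases le_or_gt i n with hi | hi
    · rw [qq_succ n i hi hn]
      have hi' : (i:ℝ) ≤ n := by exact_mod_cast hi
      have h0 : (i:ℝ) / (2*n - i) ≤ i / n :=
        div_le_div_of_nonneg_left (by positivity) (by linarith) (by linarith)
      have h1 : 0 ≤ (i:ℝ) / n := by positivity
      have h2 : (((i+1:ℕ):ℝ))^2 / n = (i:ℝ)^2/n + 2 * ((i:ℝ)/n) + 1/n := by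
        push_cast; field_simp; ring
      have h3 : (0:ℝ) ≤ 1 / n := by positivity
      rw [h2]
      nlinarith [qq_nonneg n i, qq_le_one n i hn,
        mul_le_mul_of_nonneg_right h0 (qq_nonneg n i),
        mul_le_mul_of_nonneg_left (qq_le_one n i hn) h1]
    · rw [qq_big n (i+1) (by omega) hn]
      have : (1:ℝ) ≤ ((i+1:ℕ):ℝ)^2 / n := by
        rw [le_div_iff₀ (by linarith)]
        have : (n:ℝ) ≤ i := by exact_mod_cast hi.le
        push_cast; nlinarith
      linarith

noncomputable def dd (n j : ℕ) : ℝ := ((n+1).descFactorial j : ℝ) / (n:ℝ)^j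

lemma dd_tendsto (j : ℕ) : Tendsto (fun n => dd n j) atTop (nhds 1) := by
  induction j with
  | zero => simp [dd]
  | succ j ih =>
    have h : Tendsto (fun n : ℕ => 1 + (1 - (j:ℝ)) / n) atTop (nhds (1 + 0)) :=
      tendsto_const_nhds.add (tendsto_const_div_atTop_nhds_zero_nat _)
    have := h.mul ih
    simp only [add_zero, one_mul] at this
    refine this.congr' ?_
    filter_upwards [eventually_ge_atTop (j+1)] with n hn
    have hn' : (n:ℝ) ≠ 0 := by
      have : n ≠ 0 := by omega
      exact_mod_cast this
    unfold dd
    rw [Nat.descFactorial_succ, Nat.cast_mul, Nat.cast_sub (by omega)]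
    push_cast
    field_simp
    ring

lemma dd_nonneg (n j : ℕ) : 0 ≤ dd n j := by unfold dd; positivity

lemma dd_le (n j : ℕ) (hn : 1 ≤ n) : dd n j ≤ 2 ^ j := by
  have hn' : (1:ℝ) ≤ n := by exact_mod_cast hn
  unfold dd
  rw [div_le_iff₀ (by positivity), ← mul_pow]
  have h1 : (((n+1).descFactorial j : ℕ) : ℝ) ≤ ((n+1 : ℕ):ℝ)^j := by
    exact_mod_cast Nat.descFactorial_le_pow (n+1) j
  refine h1.trans (pow_le_pow_left₀ (by positivity) ?_ j)
  push_cast; linarith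

noncomputable def lam (x : ℤ) (n : ℕ) : ℝ := ((n : ℝ) / 2 ^ (Nat.log 2 n)) * (2 : ℝ) ^ (-(x + 1))

lemma lam_nonneg (x : ℤ) (n : ℕ) : 0 ≤ lam x n := by unfold lam; positivity

lemma lam_le (x : ℤ) (n : ℕ) : lam x n ≤ 2 * (2 : ℝ) ^ (-(x + 1)) := by
  unfold lam
  refine mul_le_mul_of_nonneg_right ?_ (by positivity)
  rw [div_le_iff₀ (by positivity), ← pow_succ']
  exact_mod_cast (Nat.lt_pow_succ_log_self (by norm_num) n).le

lemma lam_eq (x : ℤ) (n m : ℕ) (h : (m:ℤ) = Nat.log 2 n + x + 1) : lam x n = n / 2 ^ m := by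
  unfold lam
  have : (2:ℝ) ^ m = 2 ^ (Nat.log 2 n) * (2:ℝ) ^ (x+1) := by
    rw [← zpow_natCast, h, add_assoc, zpow_add₀ (by norm_num), zpow_natCast]
  rw [this, zpow_neg]
  field_simp

noncomputable def mm (x : ℤ) (n : ℕ) : ℕ := ((Nat.log 2 n : ℤ) + x + 1).toNat

lemma mm_sq (x : ℤ) : Tendsto (fun n : ℕ => (mm x n : ℝ)^2 / n) atTop (nhds 0) := by
  have h1 : Tendsto (fun n : ℕ => Real.log n ^ 2 / (n:ℝ)) atTop (nhds 0) := by
    have := (Real.tendsto_pow_log_div_mul_add_atTop 1 0 2 one_ne_zero).comp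
      (tendsto_natCast_atTop_atTop (R := ℝ))
    simpa [Function.comp_def] using this
  have h2 : Tendsto (fun n : ℕ => (2 * (|(x:ℝ)|+1)^2) / (n:ℝ)) atTop (nhds 0) :=
    tendsto_const_div_atTop_nhds_zero_nat _
  have h3 := (h1.const_mul (2 / Real.log 2 ^ 2)).add h2
  simp only [mul_zero, add_zero] at h3
  refine squeeze_zero (fun n => by positivity) (fun n => ?_) h3
  have hl : (Nat.log 2 n : ℝ) ≤ Real.log n / Real.log 2 := by
    have := Real.natLog_le_logb n 2
    simpa [Real.logb] using this
  have hm : (mm x n : ℝ) ≤ Real.log n / Real.log 2 + (|(x:ℝ)| + 1) := by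
    have hz : (mm x n : ℤ) ≤ Nat.log 2 n + (|x| + 1) := by
      have := le_abs_self x
      have := abs_nonneg x
      unfold mm; omega
    have hz' : (mm x n : ℝ) ≤ Nat.log 2 n + (|(x:ℝ)| + 1) := by exact_mod_cast hz
    linarith
  have h0 : (0:ℝ) ≤ mm x n := by positivity
  rw [show 2 / Real.log 2 ^ 2 * (Real.log n ^ 2 / (n:ℝ)) + (2 * (|(x:ℝ)|+1)^2) / (n:ℝ) =
    (2 * (Real.log n / Real.log 2)^2 + 2 * (|(x:ℝ)|+1)^2) / n by ring]
  refine div_le_div_of_nonneg_right ?_ (by positivity)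
  have := pow_le_pow_left₀ h0 hm 2
  nlinarith [sq_nonneg (Real.log n / Real.log 2 - (|(x:ℝ)| + 1))]

lemma qq_tendsto (x : ℤ) (j : ℕ) :
    Tendsto (fun n => qq n (j * mm x n)) atTop (nhds 1) := by
  have h := ((mm_sq x).const_mul ((j:ℝ)^2)).const_sub 1
  simp only [mul_zero, sub_zero] at h
  refine tendsto_of_tendsto_of_tendsto_of_le_of_le' h tendsto_const_nhds ?_ ?_
  · filter_upwards [eventually_ge_atTop 1] with n hn
    have := qq_lower n (j * mm x n) hn
    refine le_trans (le_of_eq ?_) this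
    push_cast; ring
  · filter_upwards [eventually_ge_atTop 1] with n hn
    exact qq_le_one n _ hn

lemma prob_formula (x : ℤ) (n : ℕ) (hn : 1 ≤ n) (hx : 0 ≤ (Nat.log 2 n : ℤ) + x) :
    ((Nat.card {π : NCPart n // (maxBlockSize π : ℤ) ≤ (Nat.log 2 n : ℤ) + x} : ℝ) /
            (Fintype.card (NCPart n) : ℝ)) =
    ∑' j, (-lam x n)^j / (j.factorial : ℝ) * (dd n j * qq n (j * mm x n)) := by
  obtain ⟨k, hk⟩ := Int.eq_ofNat_of_zero_le hx
  have hm : mm x n = k + 1 := by unfold mm; omega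
  have hl := lam_eq x n (k+1) (by push_cast; omega)
  have hc : ((2*n).choose n : ℝ) ≠ 0 := by
    exact_mod_cast (Nat.choose_pos (by omega)).ne'
  have hn' : (n:ℝ) ≠ 0 := by
    have : n ≠ 0 := by omega
    exact_mod_cast this
  have e1 : ∀ π : NCPart n, ((maxBlockSize π : ℤ) ≤ (Nat.log 2 n : ℤ) + x) = (maxBlockSize π ≤ k) := by
    intro π; rw [hk]; simp
  simp only [e1]
  have hn1 : ((n:ℝ)+1) ≠ 0 := by positivity
  rw [← mul_div_mul_left _ _ hn1, count_formula k n hn, count_all n hn, tsum_eq_sum (s := range (n+2)),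
    sum_div]
  · refine sum_congr rfl fun j _ => ?_
    rw [hl, hm]
    unfold dd qq
    rw [Nat.descFactorial_eq_factorial_mul_choose]
    have hf : (j.factorial : ℝ) ≠ 0 := by positivity
    have h2 : (2:ℝ) ^ (j * (k+1)) = (2 ^ (k+1)) ^ j := by rw [mul_comm, pow_mul]
    rw [h2, neg_pow ((n:ℝ) / 2 ^ (k+1)), div_pow]
    push_cast
    field_simp
  · intro j hj
    unfold dd
    rw [Nat.descFactorial_eq_zero_iff_lt.2 (by simp at hj; omega)]
    simp

lemma diff_tendsto (x : ℤ) : Tendsto (fun n => ∑' j, (-lam x n)^j / (j.factorial : ℝ) *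
    (dd n j * qq n (j * mm x n) - 1)) atTop (nhds 0) := by
  set L : ℝ := 2 * (2 : ℝ) ^ (-(x + 1)) with hL
  have hL0 : 0 ≤ L := by positivity
  have hp : ∀ n j, ‖(-lam x n)^j / (j.factorial : ℝ)‖ ≤ L ^ j / (j.factorial : ℝ) := by
    intro n j
    rw [norm_div, norm_pow, norm_neg, Real.norm_of_nonneg (lam_nonneg x n), Real.norm_natCast]
    gcongr
    · exact lam_nonneg x n
    · exact lam_le x n
  have key := tendsto_tsum_of_dominated_convergence (𝓕 := atTop)
    (f := fun n j => (-lam x n)^j / (j.factorial : ℝ) * (dd n j * qq n (j * mm x n) - 1))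
    (g := fun _ => (0:ℝ)) (bound := fun j => (2*L)^j / (j.factorial : ℝ) + L^j / (j.factorial : ℝ))
    ((Real.summable_pow_div_factorial _).add (Real.summable_pow_div_factorial _)) ?_ ?_
  · simpa using key
  · intro j
    have h1 : Tendsto (fun n => dd n j * qq n (j * mm x n) - 1) atTop (nhds 0) := by
      have := ((dd_tendsto j).mul (qq_tendsto x j)).sub_const 1
      simpa using this
    have h2 := (h1.norm).const_mul (L ^ j / (j.factorial : ℝ))
    simp only [norm_zero, mul_zero] at h2
    refine squeeze_zero_norm (fun n => ?_) h2
    rw [norm_mul]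
    exact mul_le_mul_of_nonneg_right (hp n j) (norm_nonneg _)
  · filter_upwards [eventually_ge_atTop 1] with n hn j
    rw [norm_mul]
    have h3 : ‖dd n j * qq n (j * mm x n) - 1‖ ≤ 2 ^ j + 1 := by
      have a := dd_nonneg n j
      have b := qq_nonneg n (j * mm x n)
      have c := qq_le_one n (j * mm x n) hn
      have d := dd_le n j hn
      have e : dd n j * qq n (j * mm x n) ≤ dd n j := mul_le_of_le_one_right a c
      have f : 0 ≤ dd n j * qq n (j * mm x n) := mul_nonneg a b
      rw [Real.norm_eq_abs, abs_le]
      constructor <;> linarith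
    calc _ ≤ L ^ j / (j.factorial : ℝ) * (2 ^ j + 1) :=
          mul_le_mul (hp n j) h3 (norm_nonneg _) (by positivity)
      _ = _ := by rw [mul_pow 2 L j]; ring

lemma exp_tsum (y : ℝ) : Real.exp y = ∑' j : ℕ, y ^ j / (j.factorial : ℝ) := by
  rw [Real.exp_eq_exp_ℝ, NormedSpace.exp_eq_tsum_div]

end Aux

/-- Double-exponential law for the largest block: fix `x : ℤ`, and set
`k(n) = ⌊log₂ n⌋ + x` and `α(n) = n/2^{⌊log₂ n⌋} ∈ [1,2)`.  Then
`P[L_n ≤ k(n)] = exp(−α(n)·2^{−(x+1)})·(1 + o(1))`, i.e.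
`exp(α(n)·2^{−(x+1)})·P[L_n ≤ k(n)] → 1` as `n → ∞`.
(Here `⌊log₂ n⌋ = Nat.log 2 n` for `n ≥ 1`.) -/
theorem maxBlockSize_doubleExponential (x : ℤ) :
    Tendsto
      (fun n : ℕ =>
        Real.exp (((n : ℝ) / 2 ^ (Nat.log 2 n)) * (2 : ℝ) ^ (-(x + 1))) *
          ((Nat.card {π : NCPart n //
              (maxBlockSize π : ℤ) ≤ (Nat.log 2 n : ℤ) + x} : ℝ) /
            (Fintype.card (NCPart n) : ℝ)))
      atTop (nhds 1) := by
  have hD : Tendsto (fun n => Real.exp (lam x n) * ∑' j, (-lam x n)^j / (j.factorial : ℝ) *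
      (dd n j * qq n (j * mm x n) - 1)) atTop (nhds 0) := by
    have h2 := ((diff_tendsto x).norm).const_mul (Real.exp (2 * (2 : ℝ) ^ (-(x + 1))))
    simp only [norm_zero, mul_zero] at h2
    refine squeeze_zero_norm (fun n => ?_) h2
    rw [norm_mul, Real.norm_of_nonneg (Real.exp_pos _).le]
    exact mul_le_mul_of_nonneg_right (Real.exp_le_exp.2 (lam_le x n)) (norm_nonneg _)
  have hD1 := hD.add_const 1
  rw [zero_add] at hD1
  refine hD1.congr' ?_
  have hlog : Tendsto (fun n : ℕ => Nat.log 2 n) atTop atTop :=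
    tendsto_atTop.2 fun b => by
      filter_upwards [eventually_ge_atTop (2 ^ b)] with n hn
      exact Nat.le_log_of_pow_le (by norm_num) hn
  filter_upwards [eventually_ge_atTop 1, hlog.eventually_ge_atTop (x.natAbs)] with n hn hx
  rw [prob_formula x n hn (by omega)]
  change _ = Real.exp (lam x n) * _
  have hs := Real.summable_pow_div_factorial (-lam x n)
  have hs2 : Summable (fun j : ℕ => (-lam x n)^j / (j.factorial : ℝ) *
      (dd n j * qq n (j * mm x n))) := by
    refine summable_of_ne_finset_zero (s := Finset.range (n+2)) ?_
    intro j hj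
    unfold dd
    rw [Nat.descFactorial_eq_zero_iff_lt.2 (by simp at hj; omega)]
    simp
  have e : ∑' j, (-lam x n)^j / (j.factorial : ℝ) * (dd n j * qq n (j * mm x n) - 1) =
      (∑' j, (-lam x n)^j / (j.factorial : ℝ) * (dd n j * qq n (j * mm x n))) -
        Real.exp (-lam x n) := by
    rw [exp_tsum, ← hs2.tsum_sub hs]
    refine tsum_congr fun j => ?_
    ring
  rw [e, mul_sub, ← Real.exp_add, add_neg_cancel, Real.exp_zero]
  ring
end

section
/- Fix an integer k ≥ 1. For m ≥ 1 let a_m be the number of non-crossing partitions of [m] all of whose blocks have size at most k, and set a_0 = 1. Let y(z) = Σ_{m≥0} a_m z^{m+1}, a formal power series over ℚ with zero constant term. Then y satisfies the polynomial equation y = z + y² − z·y^{k+1}. -/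
/-- `a_m`: the number of non-crossing partitions of `[m]` all of whose blocks have size at
most `k` (for `m = 0` this equals `1`, corresponding to the empty partition). -/
noncomputable def countBounded (k m : ℕ) : ℕ :=
  Nat.card {π : NCPart m // ∀ B ∈ π.1.parts, B.card ≤ k}

/-- The formal power series `y(z) = Σ_{m≥0} a_m z^{m+1}` over `ℚ`. -/
noncomputable def boundedGF (k : ℕ) : PowerSeries ℚ :=
  PowerSeries.X * PowerSeries.mk fun m => (countBounded k m : ℚ)

namespace NCaux

structure Base (a b : ℕ) (g : ℕ → ℕ) : Prop where
  le : ∀ x, x ≤ g x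
  idem : ∀ x, g (g x) = g x
  nc : ∀ x y, x < y → y < g x → g y ≤ g x
  out : ∀ x, x < a ∨ b ≤ x → g x = x
  lt : ∀ x, x < b → g x < b

def cnt (a b : ℕ) (g : ℕ → ℕ) (v : ℕ) : ℕ := ((Finset.Ico a b).filter (fun x => g x = v)).card

def S (k a b : ℕ) : Set (ℕ → ℕ) := {g | Base a b g ∧ ∀ v, cnt a b g v ≤ k}

def T (k j a b : ℕ) : Set (ℕ → ℕ) :=
  {g | Base a b g ∧ cnt a b g (g a) = j ∧ ∀ v, v ≠ g a → cnt a b g v ≤ k}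

def glue (a p b : ℕ) (g1 g2 : ℕ → ℕ) (x : ℕ) : ℕ :=
  if x = a then (if p < b then g2 p else a) else if x < p then g1 x else g2 x

theorem base_finite (a b : ℕ) : {g | Base a b g}.Finite := by
  let φ : {g | Base a b g} → (Fin b → Fin b) := fun g x => ⟨g.1 x, g.2.lt x x.2⟩
  have : Function.Injective φ := by
    intro g h e
    ext x
    by_cases hx : x < b
    · have := congrFun e ⟨x, hx⟩
      simpa [φ] using this
    · rw [Base.out (show Base a b g.1 from g.2) x (by omega), Base.out (show Base a b h.1 from h.2) x (by omega)]
  exact Finite.of_injective φ this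

instance (k a b : ℕ) : Finite (S k a b) := ((base_finite a b).subset (fun _ h => h.1))
instance (k j a b : ℕ) : Finite (T k j a b) := ((base_finite a b).subset (fun _ h => h.1))

theorem cnt_zero {a b : ℕ} {g : ℕ → ℕ} {v : ℕ} (h : ∀ x, a ≤ x → x < b → g x ≠ v) :
    cnt a b g v = 0 := by
  simp only [cnt, Finset.card_eq_zero, Finset.filter_eq_empty_iff, Finset.mem_Ico]
  exact fun x hx => h x hx.1 hx.2

theorem cnt_congr {a b : ℕ} {g g' : ℕ → ℕ} {v : ℕ} (h : ∀ x, a ≤ x → x < b → g x = g' x) :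
    cnt a b g v = cnt a b g' v := by
  unfold cnt
  congr 1
  apply Finset.filter_congr
  intro x hx
  rw [Finset.mem_Ico] at hx
  rw [h x hx.1 hx.2]

theorem cnt_split (a p b : ℕ) (h1 : a ≤ p) (h2 : p ≤ b) (g : ℕ → ℕ) (v : ℕ) :
    cnt a b g v = cnt a p g v + cnt p b g v := by
  unfold cnt
  rw [← Finset.Ico_union_Ico_eq_Ico h1 h2, Finset.filter_union, Finset.card_union_of_disjoint]
  exact Finset.disjoint_filter_filter (Finset.Ico_disjoint_Ico_consecutive a p b)

theorem cnt_one (a : ℕ) (g : ℕ → ℕ) (v : ℕ) :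
    cnt a (a+1) g v = if g a = v then 1 else 0 := by
  unfold cnt
  rw [Nat.Ico_succ_singleton, Finset.filter_singleton]
  split_ifs <;> simp

theorem cnt_glue {a p b : ℕ} (h1 : a < p) (h2 : p ≤ b) (g1 g2 : ℕ → ℕ) (v : ℕ) :
    cnt a b (glue a p b g1 g2) v =
      (if glue a p b g1 g2 a = v then 1 else 0) + cnt (a+1) p g1 v + cnt p b g2 v := by
  rw [cnt_split a (a+1) b (by omega) (by omega), cnt_split (a+1) p b (by omega) (by omega), cnt_one,
    cnt_congr (g := glue a p b g1 g2) (g' := g1) (a := a+1) (b := p),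
    cnt_congr (g := glue a p b g1 g2) (g' := g2) (a := p) (b := b), add_assoc]
  · intro x hx hx'; simp only [glue]; rw [if_neg (by omega), if_neg (by omega)]
  · intro x hx hx'; simp only [glue]; rw [if_neg (by omega), if_pos (by omega)]

theorem glue_base {a p b : ℕ} (h1 : a < p) (h2 : p ≤ b) {g1 g2 : ℕ → ℕ}
    (H1 : Base (a+1) p g1) (H2 : Base p b g2) : Base a b (glue a p b g1 g2) := by
  obtain ⟨l1, i1, n1, o1, t1⟩ := H1
  obtain ⟨l2, i2, n2, o2, t2⟩ := H2
  have l2p := l2 p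
  have hG : ∀ x, (x < a ∧ glue a p b g1 g2 x = x) ∨ (x = a ∧ p < b ∧ glue a p b g1 g2 x = g2 p) ∨
      (x = a ∧ p = b ∧ glue a p b g1 g2 x = a) ∨
      (a < x ∧ x < p ∧ glue a p b g1 g2 x = g1 x ∧ g1 x < p ∧ x ≤ g1 x) ∨
      (p ≤ x ∧ x < b ∧ glue a p b g1 g2 x = g2 x ∧ g2 x < b ∧ x ≤ g2 x) ∨
      (b ≤ x ∧ glue a p b g1 g2 x = x) := by
    intro x
    have := l1 x
    have := t1 x
    have := o1 x
    have := l2 x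
    have := t2 x
    have := o2 x
    simp only [glue]
    split_ifs <;> omega
  have tp := t2 p
  generalize glue a p b g1 g2 = G at hG
  constructor
  · intro x
    have := hG x
    omega
  · intro x
    have e1 := i1 x
    have e2 := i2 x
    have e3 := i2 p
    have h' := hG (G x)
    rcases hG x with ⟨h, e⟩ | ⟨h, h3, e⟩ | ⟨h, h3, e⟩ | ⟨h, h3, e, h4⟩ | ⟨h, h3, e, h4⟩ | ⟨h, e⟩
    · rw [e, e]
    · rw [e] at h' ⊢
      omega
    · rw [← h] at e; rw [e, e]
    · rw [e] at h' ⊢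
      omega
    · rw [e] at h' ⊢
      omega
    · rw [e, e]
  · intro x y hxy hy
    have := hG x
    have := hG y
    have := n1 x y hxy
    have := n2 x y hxy
    have := n2 p y
    have : y = p → g2 y = g2 p := by rintro rfl; rfl
    omega
  · intro x
    have := hG x
    omega
  · intro x
    have := hG x
    omega

theorem glue_ne {a p b x : ℕ} {g1 g2 : ℕ → ℕ}
    (H1 : Base (a+1) p g1) (H2 : Base p b g2) (hx : a < x) (hx' : x < p) :
    glue a p b g1 g2 x ≠ glue a p b g1 g2 a := by
  have := H1.le x
  have := H1.lt x hx'
  have := H2.le p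
  simp only [glue]
  grind

/-- count conditions transfer -/
theorem glue_cnt_iff {k j a p b : ℕ} (h1 : a < p) (h2 : p ≤ b) {g1 g2 : ℕ → ℕ}
    (H1 : Base (a+1) p g1) (H2 : Base p b g2) :
    (cnt a b (glue a p b g1 g2) (glue a p b g1 g2 a) = j + 1 ∧
      ∀ v, v ≠ glue a p b g1 g2 a → cnt a b (glue a p b g1 g2) v ≤ k) ↔
    ((∀ v, cnt (a+1) p g1 v ≤ k) ∧ cnt p b g2 (g2 p) = j ∧ ∀ v, v ≠ g2 p → cnt p b g2 v ≤ k) := by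
  have z1 : ∀ v, (v ≤ a ∨ p ≤ v) → cnt (a+1) p g1 v = 0 := by
    intro v hv
    apply cnt_zero
    intro x hx hx'
    have := H1.le x
    have := H1.lt x hx'
    omega
  have z2 : ∀ v, v < p → cnt p b g2 v = 0 := by
    intro v hv
    apply cnt_zero
    intro x hx hx'
    have := H2.le x
    omega
  have hle := H2.le p
  simp only [cnt_glue h1 h2]
  by_cases hp : p < b
  · have e : glue a p b g1 g2 a = g2 p := by simp [glue, hp]
    rw [e]
    grind
  · have e : glue a p b g1 g2 a = a := by simp [glue, hp]
    have z3 : ∀ v, cnt p b g2 v = 0 := fun v => cnt_zero (by omega)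
    rw [e]
    grind

theorem exists_glue {a b : ℕ} (hab : a < b) {g : ℕ → ℕ} (H : Base a b g) :
    ∃ p g1 g2, a < p ∧ p ≤ b ∧ Base (a+1) p g1 ∧ Base p b g2 ∧ glue a p b g1 g2 = g := by
  classical
  have hex : ∃ p, a < p ∧ (p = b ∨ g p = g a) := ⟨b, hab, Or.inl rfl⟩
  obtain ⟨p, hp, hmin⟩ : ∃ p, (a < p ∧ (p = b ∨ g p = g a)) ∧
      ∀ q, q < p → ¬ (a < q ∧ (q = b ∨ g q = g a)) :=
    ⟨Nat.find hex, Nat.find_spec hex, fun q hq => Nat.find_min hex hq⟩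
  obtain ⟨l, i, n, o, t⟩ := H
  have hpb : p ≤ b := by
    by_contra h
    exact hmin b (by omega) ⟨hab, Or.inl rfl⟩
  have hne : ∀ x, a < x → x < p → g x ≠ g a := fun x h h' e => hmin x h' ⟨h, Or.inr e⟩
  have hlt : ∀ x, a < x → x < p → g x < p := by
    intro x h h'
    by_contra hc
    rcases hp.2 with rfl | hpa
    · exact hc (t x h')
    · have := l p
      have hh := hne x h h'
      have := n a x h (by omega)
      have := n x p h'
      have := i x
      rcases eq_or_lt_of_le (not_lt.mp hc) with e | e
      · rw [← e] at this; omega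
      · have := n x p h' e; omega
  have hga : p = b → g a = a := by
    intro e
    by_contra hc
    have := l a
    have := t a hab
    exact hne (g a) (by omega) (by omega) (i a)
  let g1 : ℕ → ℕ := fun x => if a < x ∧ x < p then g x else x
  let g2 : ℕ → ℕ := fun x => if p ≤ x then g x else x
  have hG1 : ∀ x, (a < x ∧ x < p ∧ g1 x = g x) ∨ ((x ≤ a ∨ p ≤ x) ∧ g1 x = x) := by
    intro x
    simp only [g1]
    split_ifs <;> omega
  have hG2 : ∀ x, (p ≤ x ∧ g2 x = g x) ∨ (x < p ∧ g2 x = x) := by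
    intro x
    simp only [g2]
    split_ifs <;> omega
  clear_value g1 g2
  refine ⟨p, g1, g2, hp.1, hpb, ?_, ?_, ?_⟩
  · constructor
    · intro x
      have := l x
      have := hG1 x
      omega
    · intro x
      have hl := l x
      have hi := i x
      have ht := hlt x
      have h' := hG1 (g1 x)
      rcases hG1 x with ⟨h, h3, e⟩ | ⟨h, e⟩
      · rw [e] at h' ⊢
        omega
      · rw [e, e]
    · intro x y hxy hy
      have := n x y hxy
      have := hG1 x
      have := hG1 y
      have := l y
      have := hlt x
      omega
    · intro x hx
      have := hG1 x
      omega
    · intro x hx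
      have := hG1 x
      have := hlt x
      omega
  · constructor
    · intro x
      have := l x
      have := hG2 x
      omega
    · intro x
      have hl := l x
      have hi := i x
      have h' := hG2 (g2 x)
      rcases hG2 x with ⟨h, e⟩ | ⟨h, e⟩
      · rw [e] at h' ⊢
        omega
      · rw [e, e]
    · intro x y hxy hy
      have := n x y hxy
      have := hG2 x
      have := hG2 y
      omega
    · intro x hx
      have := hG2 x
      have := o x
      omega
    · intro x hx
      have := hG2 x
      have := t x
      omega
  · funext x
    have := hG1 x
    have := hG2 x
    have := hG2 p
    simp only [glue]
    split_ifs with h3 h4 h5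
    · subst h3; omega
    · subst h3; omega
    · have := o x; omega
    · omega

theorem T_rec (k j a b : ℕ) : Nat.card (T k (j+1) a b) =
    ∑ p ∈ Finset.Ioc a b, Nat.card (S k (a+1) p) * Nat.card (T k j p b) := by
  let Φ : (Σ p : Finset.Ioc a b, S k (a+1) p × T k j p b) → T k (j+1) a b := fun z =>
    ⟨glue a z.1 b z.2.1.1 z.2.2.1, by
      obtain ⟨⟨p, hp⟩, ⟨g1, h1⟩, ⟨g2, h2⟩⟩ := z
      rw [Finset.mem_Ioc] at hp
      exact ⟨glue_base hp.1 hp.2 h1.1 h2.1,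
        (glue_cnt_iff hp.1 hp.2 h1.1 h2.1).2 ⟨h1.2, h2.2⟩⟩⟩
  have hΦ : Function.Bijective Φ := by
    constructor
    · rintro ⟨⟨p, hp⟩, ⟨g1, h1⟩, ⟨g2, h2⟩⟩ ⟨⟨p', hp'⟩, ⟨g1', h1'⟩, ⟨g2', h2'⟩⟩ e
      rw [Finset.mem_Ioc] at hp hp'
      have e : glue a p b g1 g2 = glue a p' b g1' g2' := congrArg Subtype.val e
      have key : ∀ {p p' : ℕ} {g1 g2 g1' g2' : ℕ → ℕ}, a < p → p' ≤ b → Base (a+1) p' g1' →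
          Base p' b g2' → glue a p b g1 g2 = glue a p' b g1' g2' → ¬ p < p' := by
        intro p p' g1 g2 g1' g2' h h' H1 H2 e hlt
        apply glue_ne H1 H2 h hlt
        rw [← e]
        simp only [glue]
        grind
      have hpp : p = p' := by
        have := key hp.1 hp'.2 h1'.1 h2'.1 e
        have := key hp'.1 hp.2 h1.1 h2.1 e.symm
        omega
      subst hpp
      have e1 : g1 = g1' := by
        funext x
        by_cases hx : a < x ∧ x < p
        · have := congrFun e x
          simp only [glue] at this
          grind
        · rw [Base.out (a := a+1) (b := p) h1.1 x (by omega), Base.out (a := a+1) (b := p) h1'.1 x (by omega)]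
      have e2 : g2 = g2' := by
        funext x
        by_cases hx : p ≤ x
        · have := congrFun e x
          simp only [glue] at this
          grind
        · rw [Base.out (a := p) (b := b) h2.1 x (by omega), Base.out (a := p) (b := b) h2'.1 x (by omega)]
      subst e1 e2
      rfl
    · rintro ⟨g, hB, hc⟩
      have hab : a < b := by
        by_contra h
        have : cnt a b g (g a) = 0 := cnt_zero (by omega)
        omega
      obtain ⟨p, g1, g2, h1, h2, H1, H2, rfl⟩ := exists_glue hab hB
      have := (glue_cnt_iff h1 h2 H1 H2).1 hc
      exact ⟨⟨⟨p, Finset.mem_Ioc.2 ⟨h1, h2⟩⟩, ⟨g1, H1, this.1⟩, ⟨g2, H2, this.2⟩⟩, rfl⟩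
  rw [← Nat.card_congr (Equiv.ofBijective Φ hΦ), Nat.card_sigma]
  simp only [Nat.card_prod]
  exact Finset.sum_coe_sort (Finset.Ioc a b) (fun p => Nat.card (S k (a+1) p) * Nat.card (T k j p b))

theorem S_eq (k a b : ℕ) : Nat.card (S k a b) = ∑ j ∈ Finset.range (k+1), Nat.card (T k j a b) := by
  let Φ : (Σ j : Finset.range (k+1), T k j a b) → S k a b := fun z =>
    ⟨z.2.1, z.2.2.1, fun v => by
      by_cases h : v = z.2.1 a
      · have := Finset.mem_range.1 z.1.2
        rw [h, z.2.2.2.1]; omega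
      · exact z.2.2.2.2 v h⟩
  have hΦ : Function.Bijective Φ := by
    constructor
    · rintro ⟨⟨j, hj⟩, ⟨g, h⟩⟩ ⟨⟨j', hj'⟩, ⟨g', h'⟩⟩ e
      have e : g = g' := congrArg Subtype.val e
      subst e
      have : j = j' := h.2.1.symm.trans h'.2.1
      subst this
      rfl
    · rintro ⟨g, hB, hc⟩
      exact ⟨⟨⟨cnt a b g (g a), Finset.mem_range.2 (Nat.lt_succ_of_le (hc _))⟩,
        ⟨g, hB, rfl, fun v _ => hc v⟩⟩, rfl⟩
  rw [← Nat.card_congr (Equiv.ofBijective Φ hΦ), Nat.card_sigma]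
  exact Finset.sum_coe_sort (Finset.range (k+1)) (fun j => Nat.card (T k j a b))

theorem T_zero (k a n : ℕ) : Nat.card (T k 0 a (a+n)) = if n = 0 then 1 else 0 := by
  split_ifs with h
  · subst h
    have : T k 0 a (a+0) = {id} := by
      ext g
      simp only [T, Set.mem_ofPred_eq, Set.mem_singleton_iff]
      constructor
      · rintro ⟨h, -⟩
        funext x
        exact h.out x (by omega)
      · rintro rfl
        refine ⟨⟨?_, ?_, ?_, ?_, ?_⟩, ?_, ?_⟩
        · simp
        · simp
        · intro x y; simp; omega
        · simp
        · simp
        · exact cnt_zero (by omega)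
        · intro v _
          rw [cnt_zero (by omega)]; omega
    rw [this]; simp
  · have : T k 0 a (a+n) = ∅ := by
      ext g
      simp only [T, Set.mem_ofPred_eq, Set.mem_empty_iff_false, iff_false]
      rintro ⟨-, h', -⟩
      simp only [cnt, Finset.card_eq_zero, Finset.filter_eq_empty_iff, Finset.mem_Ico] at h'
      exact h' (x := a) (by omega) rfl
    rw [this]; simp

theorem T_rec' (k j a n : ℕ) : Nat.card (T k (j+1) a (a+n)) =
    ∑ i ∈ Finset.range n, Nat.card (S k (a+1) (a+1+i)) *
      Nat.card (T k j (a+1+i) (a+1+i+(n-1-i))) := by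
  rw [T_rec]
  have : Finset.Ioc a (a+n) = (Finset.range n).image (fun i => a+1+i) := by
    ext x
    simp only [Finset.mem_Ioc, Finset.mem_image, Finset.mem_range]
    constructor
    · rintro ⟨h, h'⟩
      exact ⟨x - a - 1, by omega, by omega⟩
    · rintro ⟨i, h, rfl⟩
      omega
  rw [this, Finset.sum_image (by intro x _ y _ h; simpa using h)]
  apply Finset.sum_congr rfl
  intro i hi
  rw [Finset.mem_range] at hi
  rw [show a+1+i+(n-1-i) = a+n by omega]

theorem shift (k n : ℕ) : ∀ a j, Nat.card (T k j a (a+n)) = Nat.card (T k j 0 n) := by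
  induction n using Nat.strong_induction_on with
  | _ n ih =>
    have hS : ∀ m, m < n → ∀ a, Nat.card (S k a (a+m)) = Nat.card (S k 0 m) := by
      intro m hm a
      rw [S_eq, S_eq]
      exact Finset.sum_congr rfl (fun j _ => ih m hm a j)
    intro a j
    cases j with
    | zero =>
      have := T_zero k 0 n
      rw [zero_add] at this
      rw [T_zero, this]
    | succ j =>
      have := T_rec' k j 0 n
      rw [zero_add] at this
      rw [T_rec', this]
      apply Finset.sum_congr rfl
      intro i hi
      rw [Finset.mem_range] at hi
      rw [hS i hi, hS i hi, ih _ (by omega), ih _ (by omega)]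

theorem shiftS (k n a : ℕ) : Nat.card (S k a (a+n)) = Nat.card (S k 0 n) := by
  rw [S_eq, S_eq]
  exact Finset.sum_congr rfl (fun j _ => shift k n a j)

open PowerSeries in
theorem F_eq (k j : ℕ) : (PowerSeries.mk fun n => (Nat.card (T k j 0 n) : ℚ)) =
    (X * PowerSeries.mk fun n => (Nat.card (S k 0 n) : ℚ)) ^ j := by
  induction j with
  | zero =>
    ext n
    have := T_zero k 0 n
    rw [zero_add] at this
    rw [coeff_mk, this, pow_zero, coeff_one]
    split_ifs <;> simp
  | succ j ih =>
    rw [pow_succ', ← ih, mul_assoc]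
    ext n
    have := T_rec' k j 0 n
    rw [zero_add] at this
    rw [coeff_mk, this]
    cases n with
    | zero => simp
    | succ n =>
      rw [coeff_succ_X_mul, coeff_mul, Finset.Nat.sum_antidiagonal_eq_sum_range_succ_mk]
      push_cast
      apply Finset.sum_congr rfl
      intro i hi
      simp only [coeff_mk]
      rw [shiftS, shift]

open PowerSeries in
theorem C_eq (k : ℕ) : (PowerSeries.mk fun n => (Nat.card (S k 0 n) : ℚ)) =
    ∑ j ∈ Finset.range (k+1), (X * PowerSeries.mk fun n => (Nat.card (S k 0 n) : ℚ)) ^ j := by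
  simp only [← F_eq]
  ext n
  rw [coeff_mk, S_eq, map_sum]
  simp

def lab {m : ℕ} (P : Finpartition (Finset.univ : Finset (Fin m))) (x : Fin m) : Fin m :=
  (P.part x).max' ⟨x, P.mem_part (Finset.mem_univ x)⟩

def label {m : ℕ} (P : Finpartition (Finset.univ : Finset (Fin m))) (x : ℕ) : ℕ :=
  if h : x < m then (lab P ⟨x, h⟩ : ℕ) else x

section
variable {m : ℕ} (P : Finpartition (Finset.univ : Finset (Fin m)))

theorem lab_mem (x : Fin m) : lab P x ∈ P.part x := Finset.max'_mem _ _

theorem part_self (x : Fin m) : x ∈ P.part x := P.mem_part (Finset.mem_univ x)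

theorem part_parts (x : Fin m) : P.part x ∈ P.parts := P.part_mem.2 (Finset.mem_univ x)

theorem le_lab {x y : Fin m} (h : y ∈ P.part x) : y ≤ lab P x := Finset.le_max' _ _ h

theorem lab_congr {x y : Fin m} (h : P.part x = P.part y) : lab P x = lab P y := by
  simp only [lab, h]

theorem mem_part_iff (x y : Fin m) : y ∈ P.part x ↔ lab P y = lab P x := by
  constructor
  · intro h
    exact lab_congr P (P.part_eq_of_mem (part_parts P x) h)
  · intro h
    have h1 := P.part_eq_of_mem (part_parts P x) (lab_mem P x)
    have h2 := P.part_eq_of_mem (part_parts P y) (lab_mem P y)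
    rw [← h1, ← h, h2]
    exact part_self P y

theorem label_fin (x : Fin m) : label P x = lab P x := by
  simp [label]

theorem label_out {x : ℕ} (h : m ≤ x) : label P x = x := by
  simp [label, not_lt.2 h]

theorem parts_eq {B : Finset (Fin m)} (h : B ∈ P.parts) : ∃ x, B = P.part x := by
  obtain ⟨x, hx⟩ := P.nonempty_of_mem_parts h
  exact ⟨x, (P.part_eq_of_mem h hx).symm⟩

theorem card_part {g : ℕ → ℕ} (H : ∀ x y : Fin m, y ∈ P.part x ↔ g y = g x) (x : Fin m) :
    (P.part x).card = cnt 0 m g (g x) := by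
  rw [cnt, ← Finset.card_map Fin.valEmbedding]
  congr 1
  ext z
  simp only [Finset.mem_map, Finset.mem_filter, Finset.mem_Ico, Fin.valEmbedding_apply]
  constructor
  · rintro ⟨y, hy, rfl⟩
    exact ⟨⟨Nat.zero_le _, y.2⟩, (H x y).1 hy⟩
  · rintro ⟨⟨-, hz⟩, e⟩
    exact ⟨⟨z, hz⟩, (H x ⟨z, hz⟩).2 e, rfl⟩

theorem label_mem (x y : Fin m) : y ∈ P.part x ↔ label P y = label P x := by
  rw [label_fin, label_fin, mem_part_iff, Fin.ext_iff]

theorem label_base (hP : IsNonCrossing P) : Base 0 m (label P) := by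
  constructor
  · intro x
    by_cases h : x < m
    · have := label_fin P ⟨x, h⟩
      have h2 := le_lab P (part_self P ⟨x, h⟩)
      rw [Fin.le_def] at h2
      simp only at this h2
      omega
    · rw [label_out P (by omega)]
  · intro x
    by_cases h : x < m
    · have h1 := label_fin P ⟨x, h⟩
      simp only at h1
      rw [h1, label_fin, ← Fin.ext_iff, ← mem_part_iff]
      exact lab_mem P _
    · rw [label_out P (x := x) (by omega), label_out P (by omega)]
  · intro x y hxy hy
    by_cases h : x < m
    · have h1 := label_fin P ⟨x, h⟩
      simp only at h1
      have hl := (lab P ⟨x, h⟩).2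
      have hym : y < m := by omega
      have h2 := label_fin P ⟨y, hym⟩
      simp only at h2
      by_contra hc
      have := hP ⟨x, h⟩ ⟨y, hym⟩ (lab P ⟨x, h⟩) (lab P ⟨y, hym⟩) hxy
        (by rw [Fin.lt_def]; simp only; omega) (by rw [Fin.lt_def]; omega)
        _ (part_parts P ⟨x, h⟩) _ (part_parts P ⟨y, hym⟩) (part_self P _) (lab_mem P _)
        (part_self P _) (lab_mem P _)
      have := lab_congr P this
      rw [h1, h2, this] at hc
      exact hc le_rfl
    · rw [label_out P (x := x) (by omega)] at hy
      omega
  · intro x hx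
    exact label_out P (by omega)
  · intro x hx
    have h1 := label_fin P ⟨x, hx⟩
    simp only at h1
    rw [h1]
    exact (lab P ⟨x, hx⟩).2

end

theorem label_inj {m : ℕ} (P Q : Finpartition (Finset.univ : Finset (Fin m)))
    (h : label P = label Q) : P = Q := by
  have hp : ∀ x, P.part x = Q.part x := by
    intro x
    ext y
    rw [label_mem, label_mem, h]
  apply Finpartition.ext
  ext B
  constructor
  · intro hB
    obtain ⟨x, rfl⟩ := parts_eq P hB
    rw [hp]; exact part_parts Q x
  · intro hB
    obtain ⟨x, rfl⟩ := parts_eq Q hB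
    rw [← hp]; exact part_parts P x

theorem label_surj {m : ℕ} {g : ℕ → ℕ} (hg : Base 0 m g) :
    ∃ P : Finpartition (Finset.univ : Finset (Fin m)), IsNonCrossing P ∧ label P = g := by
  classical
  let P : Finpartition (Finset.univ : Finset (Fin m)) :=
    Finpartition.ofSetoid (Setoid.ker (fun x : Fin m => g x))
  have H : ∀ x y : Fin m, y ∈ P.part x ↔ g x = g y := by
    intro x y
    exact Finpartition.mem_part_ofSetoid_iff_rel
  refine ⟨P, ?_, ?_⟩
  · intro a b c d hab hbc hcd B hB B' hB' ha hc hb hd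
    have e1 := P.part_eq_of_mem hB ha
    have e2 := P.part_eq_of_mem hB' hb
    rw [← e1, H] at hc
    rw [← e2, H] at hd
    rw [Fin.lt_def] at hab hbc hcd
    have := hg.le c
    have := hg.le d
    have := hg.nc a b hab (by omega)
    have := hg.nc b c hbc (by omega)
    have hba : b ∈ P.part a := (H a b).2 (by omega)
    rw [← e1, ← e2]
    exact (P.part_eq_of_mem (part_parts P a) hba).symm
  · funext x
    by_cases h : x < m
    · have h1 := label_fin P ⟨x, h⟩
      simp only at h1
      rw [h1]
      apply le_antisymm
      · have := (H _ _).1 (lab_mem P ⟨x, h⟩)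
        simp only at this
        rw [this]
        exact hg.le _
      · exact le_lab P (x := ⟨x, h⟩) (y := ⟨g x, hg.lt x h⟩) ((H _ _).2 (hg.idem x).symm)
    · rw [label_out P (by omega), hg.out x (by omega)]

theorem label_cnt {m : ℕ} (P : Finpartition (Finset.univ : Finset (Fin m))) (k : ℕ) :
    (∀ B ∈ P.parts, B.card ≤ k) ↔ ∀ v, cnt 0 m (label P) v ≤ k := by
  constructor
  · intro h v
    by_cases hv : ∃ x : Fin m, label P x = v
    · obtain ⟨x, rfl⟩ := hv
      rw [← card_part P (label_mem P)]
      exact h _ (part_parts P x)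
    · rw [cnt_zero]
      · exact Nat.zero_le _
      · intro x _ hx e
        exact hv ⟨⟨x, hx⟩, e⟩
  · intro h B hB
    obtain ⟨x, rfl⟩ := parts_eq P hB
    rw [card_part P (label_mem P)]
    exact h _

theorem count_eq (k m : ℕ) : countBounded k m = Nat.card (S k 0 m) := by
  let Φ : {π : NCPart m // ∀ B ∈ π.1.parts, B.card ≤ k} → S k 0 m := fun π =>
    ⟨label π.1.1, label_base _ π.1.2, (label_cnt _ k).1 π.2⟩
  have hΦ : Function.Bijective Φ := by
    constructor
    · intro π ρ e
      exact Subtype.ext (Subtype.ext (label_inj _ _ (congrArg Subtype.val e)))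
    · rintro ⟨g, hB, hc⟩
      obtain ⟨P, hP, rfl⟩ := label_surj hB
      exact ⟨⟨⟨P, hP⟩, (label_cnt P k).2 hc⟩, rfl⟩
  exact Nat.card_congr (Equiv.ofBijective Φ hΦ)

end NCaux

/-- For a fixed `k ≥ 1`, the series `y(z) = Σ_{m≥0} a_m z^{m+1}` counting
non-crossing partitions with all block sizes at most `k` satisfies the polynomial equation
`y = z + y² − z·y^{k+1}`. -/
theorem boundedGF_equation (k : ℕ) (hk : 1 ≤ k) :
    boundedGF k =
      PowerSeries.X + (boundedGF k) ^ 2 - PowerSeries.X * (boundedGF k) ^ (k + 1) := by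
  have h := NCaux.C_eq k
  have hy : boundedGF k =
      PowerSeries.X * PowerSeries.mk fun n => (Nat.card (NCaux.S k 0 n) : ℚ) := by
    simp only [boundedGF, NCaux.count_eq]
  rw [← hy] at h
  have hg := geom_sum_mul (boundedGF k) (k+1)
  rw [← h] at hg
  have := congrArg (PowerSeries.X * ·) hg
  simp only [← mul_assoc, ← hy] at this
  linear_combination -this
end
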